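/- Let n ≥ 2, let f : Γ₊ → ℝ be smooth, symmetric, strictly positive, strictly increasing in each argument, positively homogeneous of degree one, and inverse concave, and let 0 < α ≤ 1. Let κ ∈ Γ₊ have pairwise distinct coordinates ordered κ₁ < κ₂ < … < κₙ, set F = f(κ), ḟ^k = ∂f/∂κ_k(κ), f̈^{kl} = ∂²f/∂κ_k∂κ_l(κ). Let T = (T_{kl}) be any real symmetric n×n matrix satisfying the constraint Σ_{l=1}^n ḟ^l T_{ll} = (F/κ₁) T_{11}. Then Σ_{k,l} f̈^{kl} T_{kk} T_{ll} + 2 Σ_{k>l} ((ḟ^k − ḟ^l)/(κ_k − κ_l)) T_{kl}² − (α+1) F^{-1} (Σ_k ḟ^k T_{kk})² + (α+1) κ₁^{-1} Σ_{k=1}^n ḟ^k T_{1k}² + 2 Σ_{k=1}^n Σ_{l=2}^n (ḟ^k/(κ_l − κ₁)) T_{kl}² ≥ 0. -/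

import Mathlib

open Filter Topology Matrix

noncomputable section

/-- The open positive cone Γ₊ ⊂ ℝⁿ. -/
def posCone (n : ℕ) : Set (Fin n → ℝ) := {x | ∀ i, 0 < x i}

/-- The dual function f_*(x) = f(x₁⁻¹,…,xₙ⁻¹)⁻¹. -/
def dualF (n : ℕ) (f : (Fin n → ℝ) → ℝ) : (Fin n → ℝ) → ℝ :=
  fun x => (f fun i => (x i)⁻¹)⁻¹

/-- First partial derivative ḟ^i(x) = ∂f/∂x_i(x). -/
def D1 (n : ℕ) (f : (Fin n → ℝ) → ℝ) (x : Fin n → ℝ) (i : Fin n) : ℝ :=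
  fderiv ℝ f x (Pi.single i 1)

/-- Second partial derivative f̈^{ij}(x) = ∂²f/∂x_i∂x_j(x). -/
def D2 (n : ℕ) (f : (Fin n → ℝ) → ℝ) (x : Fin n → ℝ) (i j : Fin n) : ℝ :=
  fderiv ℝ (fun y => fderiv ℝ f y (Pi.single i 1)) x (Pi.single j 1)

lemma aux_isOpen (n : ℕ) : IsOpen (posCone n) := by
  have : posCone n = ⋂ i, {x : Fin n → ℝ | 0 < x i} := by
    ext x; simp [posCone]
  rw [this]
  exact isOpen_iInter_of_finite fun i => isOpen_lt continuous_const (continuous_apply i)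

lemma aux_fderiv_eq (n : ℕ) (L : (Fin n → ℝ) →L[ℝ] ℝ) (v : Fin n → ℝ) :
    L v = ∑ i, L (Pi.single i 1) * v i := by
  conv_lhs => rw [pi_eq_sum_univ' v]
  rw [map_sum]
  refine Finset.sum_congr rfl fun i _ => ?_
  rw [map_smul, smul_eq_mul, mul_comm]

/-- the curve `t ↦ (κ⁻¹ + t z)⁻¹` -/
def auxC (n : ℕ) (κ z : Fin n → ℝ) (t : ℝ) : Fin n → ℝ := fun i => ((κ i)⁻¹ + t * z i)⁻¹

def auxS (n : ℕ) (κ z : Fin n → ℝ) : Set ℝ := {t | ∀ i, 0 < (κ i)⁻¹ + t * z i}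

lemma auxS_open (n : ℕ) (κ z : Fin n → ℝ) : IsOpen (auxS n κ z) := by
  have h : auxS n κ z = (fun t : ℝ => fun i => (κ i)⁻¹ + t * z i) ⁻¹' posCone n := rfl
  rw [h]
  exact (aux_isOpen n).preimage (by fun_prop)

lemma auxS_zero (n : ℕ) (κ z : Fin n → ℝ) (hκ : κ ∈ posCone n) : (0 : ℝ) ∈ auxS n κ z := by
  intro i; have := hκ i; simpa using this

lemma auxC_zero (n : ℕ) (κ z : Fin n → ℝ) : auxC n κ z 0 = κ := by
  ext i; simp [auxC]

lemma auxC_mem (n : ℕ) (κ z : Fin n → ℝ) {t : ℝ} (ht : t ∈ auxS n κ z) :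
    auxC n κ z t ∈ posCone n := fun i => inv_pos.2 (ht i)

lemma auxC_deriv_i (n : ℕ) (κ z : Fin n → ℝ) {t : ℝ} (ht : t ∈ auxS n κ z) (i : Fin n) :
    HasDerivAt (fun t => auxC n κ z t i) (-(z i) * (auxC n κ z t i) ^ 2) t := by
  have h1 : HasDerivAt (fun t : ℝ => (κ i)⁻¹ + t * z i) (z i) t := by
    simpa using ((hasDerivAt_id t).mul_const (z i)).const_add (κ i)⁻¹
  have := h1.fun_inv (ht i).ne'
  have e : -(z i) / ((κ i)⁻¹ + t * z i) ^ 2 = -(z i) * (auxC n κ z t i) ^ 2 := by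
    simp [auxC, div_eq_mul_inv]
  rw [e] at this
  exact this

lemma auxC_deriv (n : ℕ) (κ z : Fin n → ℝ) {t : ℝ} (ht : t ∈ auxS n κ z) :
    HasDerivAt (auxC n κ z) (fun i => -(z i) * (auxC n κ z t i) ^ 2) t :=
  hasDerivAt_pi.2 fun i => auxC_deriv_i n κ z ht i

lemma aux_phi_deriv (n : ℕ) (f : (Fin n → ℝ) → ℝ)
    (hsmooth : ContDiffOn ℝ (⊤ : ℕ∞) f (posCone n)) (κ z : Fin n → ℝ)
    {t : ℝ} (ht : t ∈ auxS n κ z) :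
    HasDerivAt (fun t => f (auxC n κ z t))
      (∑ i, D1 n f (auxC n κ z t) i * (-(z i) * (auxC n κ z t i) ^ 2)) t := by
  have hd : DifferentiableAt ℝ f (auxC n κ z t) :=
    (hsmooth.contDiffAt ((aux_isOpen n).mem_nhds (auxC_mem n κ z ht))).differentiableAt (by simp)
  have := hd.hasFDerivAt.comp_hasDerivAt t (auxC_deriv n κ z ht)
  rw [aux_fderiv_eq] at this
  exact this

lemma aux_D1_deriv (n : ℕ) (f : (Fin n → ℝ) → ℝ)
    (hsmooth : ContDiffOn ℝ (⊤ : ℕ∞) f (posCone n)) (κ z : Fin n → ℝ)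
    {t : ℝ} (ht : t ∈ auxS n κ z) (i : Fin n) :
    HasDerivAt (fun t => D1 n f (auxC n κ z t) i)
      (∑ j, D2 n f (auxC n κ z t) i j * (-(z j) * (auxC n κ z t j) ^ 2)) t := by
  have hc : ContDiffAt ℝ (⊤ : ℕ∞) f (auxC n κ z t) :=
    hsmooth.contDiffAt ((aux_isOpen n).mem_nhds (auxC_mem n κ z ht))
  have hc2 : ContDiffAt ℝ 1 (fderiv ℝ f) (auxC n κ z t) :=
    hc.fderiv_right (by norm_cast)
  have hd : DifferentiableAt ℝ (fun y => fderiv ℝ f y (Pi.single i 1)) (auxC n κ z t) :=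
    (hc2.differentiableAt (by simp)).clm_apply (differentiableAt_const _)
  have := hd.hasFDerivAt.comp_hasDerivAt t (auxC_deriv n κ z ht)
  rw [aux_fderiv_eq] at this
  exact this

lemma aux_concave (n : ℕ) (f : (Fin n → ℝ) → ℝ)
    (hinvconc : ConcaveOn ℝ (posCone n) (dualF n f)) (κ z : Fin n → ℝ) :
    ConcaveOn ℝ (auxS n κ z) (fun t => (f (auxC n κ z t))⁻¹) := by
  have := hinvconc.comp_affineMap
    (AffineMap.lineMap (fun i => (κ i)⁻¹) (fun i => (κ i)⁻¹ + z i) : ℝ →ᵃ[ℝ] (Fin n → ℝ))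
  have e : ∀ t : ℝ, AffineMap.lineMap (fun i => (κ i)⁻¹) (fun i => (κ i)⁻¹ + z i) t
      = fun i => (κ i)⁻¹ + t * z i := by
    intro t; ext i; simp [AffineMap.lineMap_apply]; ring
  have e1 : auxS n κ z = (AffineMap.lineMap (fun i => (κ i)⁻¹) (fun i => (κ i)⁻¹ + z i) :
      ℝ →ᵃ[ℝ] (Fin n → ℝ)) ⁻¹' posCone n := by
    ext t
    rw [Set.mem_preimage, e]
    rfl
  have e2 : (fun t => (f (auxC n κ z t))⁻¹) = dualF n f ∘
      (AffineMap.lineMap (fun i => (κ i)⁻¹) (fun i => (κ i)⁻¹ + z i) : ℝ →ᵃ[ℝ] (Fin n → ℝ)) := by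
    ext t
    rw [Function.comp_apply, e]
    rfl
  rw [e1, e2]
  exact this

lemma aux_second (n : ℕ) (f : (Fin n → ℝ) → ℝ)
    (hsmooth : ContDiffOn ℝ (⊤ : ℕ∞) f (posCone n))
    (hpos : ∀ x ∈ posCone n, 0 < f x)
    (hinvconc : ConcaveOn ℝ (posCone n) (dualF n f))
    (κ : Fin n → ℝ) (hκ : κ ∈ posCone n) (y : Fin n → ℝ) :
    2 * (f κ)⁻¹ * (∑ k, D1 n f κ k * y k) ^ 2 ≤
      (∑ k, ∑ l, D2 n f κ k l * y k * y l) + 2 * ∑ k, D1 n f κ k / κ k * y k ^ 2 := by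
  set z : Fin n → ℝ := fun i => -(y i) / (κ i) ^ 2 with hz
  have h0 := auxS_zero n κ z hκ
  have hF := hpos κ hκ
  have hzy : ∀ i, -(z i) * κ i ^ 2 = y i := by
    intro i; have := (hκ i).ne'; simp only [hz]; field_simp
  set A : ℝ → ℝ := fun t => ∑ i, D1 n f (auxC n κ z t) i * (-(z i) * (auxC n κ z t i) ^ 2) with hA
  have hq : ∀ t ∈ auxS n κ z, HasDerivAt (fun t => (f (auxC n κ z t))⁻¹)
      (-(A t) / (f (auxC n κ z t)) ^ 2) t := fun t ht =>
    (aux_phi_deriv n f hsmooth κ z ht).fun_inv (hpos _ (auxC_mem n κ z ht)).ne'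
  have hanti := (aux_concave n f hinvconc κ z).antitoneOn_deriv
    (fun t ht => (hq t ht).differentiableAt)
  have hA' : HasDerivAt A (∑ i, ((∑ j, D2 n f κ i j * y j) * y i
      + D1 n f κ i * (2 * y i ^ 2 / κ i))) 0 := by
    apply HasDerivAt.fun_sum
    intro i _
    have h1 := aux_D1_deriv n f hsmooth κ z h0 i
    have h2 := ((auxC_deriv_i n κ z h0 i).fun_pow 2).const_mul (-(z i))
    have h3 := h1.fun_mul h2
    simp only [auxC_zero, hzy] at h3
    convert h3 using 1
    congr 2
    have := (hκ i).ne'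
    rw [← hzy i]
    field_simp
    ring_nf
  have hA0 : A 0 = ∑ i, D1 n f κ i * y i := by
    simp only [hA, auxC_zero, hzy]
  have hφ := aux_phi_deriv n f hsmooth κ z h0
  have hd2 := hA'.fun_neg.fun_div (hφ.fun_pow 2) (by rw [auxC_zero]; positivity)
  have hev : deriv (fun t => (f (auxC n κ z t))⁻¹) =ᶠ[𝓝 0]
      fun t => -(A t) / (f (auxC n κ z t)) ^ 2 := by
    filter_upwards [(auxS_open n κ z).mem_nhds h0] with t ht using (hq t ht).deriv
  have hd3 := hd2.congr_of_eventuallyEq hev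
  have hle : derivWithin (deriv (fun t => (f (auxC n κ z t))⁻¹)) (auxS n κ z) 0 ≤ 0 :=
    hanti.derivWithin_nonpos
  rw [derivWithin_of_isOpen (auxS_open n κ z) h0, hd3.deriv] at hle
  simp only [auxC_zero, hzy, hA0] at hle
  set P := ∑ i, D1 n f κ i * y i with hP
  have e : (∑ i, ((∑ j, D2 n f κ i j * y j) * y i + D1 n f κ i * (2 * y i ^ 2 / κ i)))
      = (∑ k, ∑ l, D2 n f κ k l * y k * y l) + 2 * ∑ k, D1 n f κ k / κ k * y k ^ 2 := by
    rw [Finset.sum_add_distrib, Finset.mul_sum]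
    congr 1
    · refine Finset.sum_congr rfl fun i _ => ?_
      rw [Finset.sum_mul]
      exact Finset.sum_congr rfl fun j _ => by ring
    · exact Finset.sum_congr rfl fun j _ => by ring
  rw [e] at hle
  set B := (∑ k, ∑ l, D2 n f κ k l * y k * y l) + 2 * ∑ k, D1 n f κ k / κ k * y k ^ 2
  have hnum := (div_nonpos_iff.1 hle)
  have hden : 0 < (f κ ^ 2) ^ 2 := by positivity
  rcases hnum with h | h
  · linarith [h.2]
  have h' := h.1
  have h2 : f κ * (2 * P ^ 2) ≤ f κ * (f κ * B) := by
    norm_num at h'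
    nlinarith
  have h3 := le_of_mul_le_mul_left h2 hF
  calc 2 * (f κ)⁻¹ * P ^ 2 = (2 * P ^ 2) / f κ := by ring
    _ ≤ B := by rw [div_le_iff₀ hF]; linarith

lemma aux_first (n : ℕ) (f : (Fin n → ℝ) → ℝ)
    (hsmooth : ContDiffOn ℝ (⊤ : ℕ∞) f (posCone n))
    (hsym : ∀ σ : Equiv.Perm (Fin n), ∀ x ∈ posCone n, f (x ∘ σ) = f x)
    (hpos : ∀ x ∈ posCone n, 0 < f x)
    (hinvconc : ConcaveOn ℝ (posCone n) (dualF n f))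
    (κ : Fin n → ℝ) (hκ : κ ∈ posCone n) (k l : Fin n) (hkl : κ l < κ k) :
    D1 n f κ l * κ l ^ 2 ≤ D1 n f κ k * κ k ^ 2 := by
  have hne : k ≠ l := by rintro rfl; exact lt_irrefl _ hkl
  set z : Fin n → ℝ := fun i => (κ (Equiv.swap k l i))⁻¹ - (κ i)⁻¹ with hz
  have h0 := auxS_zero n κ z hκ
  have hF := hpos κ hκ
  have h1 : (1 : ℝ) ∈ auxS n κ z := by
    intro i
    have := hκ (Equiv.swap k l i)
    simp [hz, this]
  have hc1 : auxC n κ z 1 = κ ∘ Equiv.swap k l := by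
    ext i; simp [auxC, hz]
  have hq := (aux_phi_deriv n f hsmooth κ z h0).fun_inv (hpos _ (auxC_mem n κ z h0)).ne'
  have hs := (aux_concave n f hinvconc κ z).slope_le_of_hasDerivAt h0 h1 one_pos hq
  rw [slope_def_field, hc1, hsym _ _ hκ] at hs
  simp only [auxC_zero, sub_self, zero_div] at hs
  have hS : ∑ i, D1 n f κ i * (-(z i) * κ i ^ 2)
      = D1 n f κ k * (-(z k) * κ k ^ 2) + D1 n f κ l * (-(z l) * κ l ^ 2) := by
    rw [← Finset.sum_pair (f := fun i => D1 n f κ i * (-(z i) * κ i ^ 2)) hne]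
    symm
    apply Finset.sum_subset (Finset.subset_univ _)
    intro i _ hi
    simp only [Finset.mem_insert, Finset.mem_singleton, not_or] at hi
    have : z i = 0 := by simp [hz, Equiv.swap_apply_of_ne_of_ne hi.1 hi.2]
    simp [this]
  rw [hS] at hs
  have hzk : z k = (κ l)⁻¹ - (κ k)⁻¹ := by simp [hz]
  have hzl : z l = -((κ l)⁻¹ - (κ k)⁻¹) := by simp [hz]
  rw [hzk, hzl] at hs
  have hw : 0 < (κ l)⁻¹ - (κ k)⁻¹ := sub_pos.2 (inv_strictAnti₀ (hκ l) hkl)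
  have hs2 := (le_div_iff₀ (by positivity : (0 : ℝ) < f κ ^ 2)).1 hs
  rw [zero_mul] at hs2
  refine le_of_mul_le_mul_left ?_ hw
  linarith

lemma aux_euler (n : ℕ) (f : (Fin n → ℝ) → ℝ)
    (hsmooth : ContDiffOn ℝ (⊤ : ℕ∞) f (posCone n))
    (hhom : ∀ k : ℝ, 0 < k → ∀ x ∈ posCone n, f (k • x) = k * f x)
    (κ : Fin n → ℝ) (hκ : κ ∈ posCone n) : ∑ i, D1 n f κ i * κ i = f κ := by
  have hd : DifferentiableAt ℝ f κ :=
    (hsmooth.contDiffAt ((aux_isOpen n).mem_nhds hκ)).differentiableAt (by simp)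
  have hl : HasDerivAt (fun t : ℝ => t • κ) κ 1 := by
    simpa using (hasDerivAt_id (1 : ℝ)).smul_const κ
  have hd' : HasFDerivAt f (fderiv ℝ f κ) ((fun t : ℝ => t • κ) 1) := by
    simpa using hd.hasFDerivAt
  have h1 := hd'.comp_hasDerivAt (1 : ℝ) hl
  have h2 : HasDerivAt (fun t : ℝ => t * f κ) (f κ) 1 := by
    simpa using (hasDerivAt_id (1 : ℝ)).mul_const (f κ)
  have hev : (f ∘ fun t : ℝ => t • κ) =ᶠ[𝓝 1] fun t : ℝ => t * f κ := by
    filter_upwards [lt_mem_nhds (one_pos : (0 : ℝ) < 1)] with t ht using hhom t ht κ hκ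
  have h3 := h1.unique (h2.congr_of_eventuallyEq hev)
  rw [aux_fderiv_eq] at h3
  exact h3

lemma aux_split (n : ℕ) (G : Fin n → Fin n → ℝ) :
    ∑ k, ∑ l, G k l = ∑ k, G k k
      + ∑ k, ∑ l ∈ Finset.univ.filter (fun l => l < k), (G k l + G l k) := by
  have h1 : ∀ k, ∑ l, G k l = G k k + ∑ l, (if l < k then G k l else 0)
      + ∑ l, (if k < l then G k l else 0) := by
    intro k
    have : G k k = ∑ l, if k = l then G k l else 0 := by simp
    rw [this, ← Finset.sum_add_distrib, ← Finset.sum_add_distrib]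
    refine Finset.sum_congr rfl fun l _ => ?_
    rcases lt_trichotomy k l with h | h | h
    · simp [h, h.ne, h.not_gt]
    · simp [h]
    · simp [h, h.ne', h.not_gt]
  simp only [h1, Finset.sum_filter, Finset.sum_add_distrib, add_assoc]
  congr 1
  rw [Finset.sum_comm (f := fun k l => if k < l then G k l else 0), ← Finset.sum_add_distrib]

/-- the gradient-term inequality `Q₁ ≥ 0` at a null point of the pinching
tensor: for inverse concave `f`, `0 < α ≤ 1`, `κ ∈ Γ₊` with strictly increasing coordinates,
and any symmetric matrix `T` with `Σ_l ḟ^l T_{ll} = (F/κ₁) T_{11}`, one has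
`Σ_{k,l} f̈^{kl} T_{kk} T_{ll} + 2 Σ_{k>l} ((ḟ^k−ḟ^l)/(κ_k−κ_l)) T_{kl}²
 − (α+1) F⁻¹ (Σ_k ḟ^k T_{kk})² + (α+1) κ₁⁻¹ Σ_k ḟ^k T_{1k}²
 + 2 Σ_k Σ_{l≥2} (ḟ^k/(κ_l−κ₁)) T_{kl}² ≥ 0`. -/
theorem gradient_terms_nonneg (n : ℕ) [NeZero n] (hn : 2 ≤ n) (f : (Fin n → ℝ) → ℝ)
    (hsmooth : ContDiffOn ℝ (⊤ : ℕ∞) f (posCone n))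
    (hsym : ∀ σ : Equiv.Perm (Fin n), ∀ x ∈ posCone n, f (x ∘ σ) = f x)
    (hpos : ∀ x ∈ posCone n, 0 < f x)
    (hmono : ∀ x ∈ posCone n, ∀ i, 0 < D1 n f x i)
    (hhom : ∀ k : ℝ, 0 < k → ∀ x ∈ posCone n, f (k • x) = k * f x)
    (hinvconc : ConcaveOn ℝ (posCone n) (dualF n f))
    (α : ℝ) (hα0 : 0 < α) (hα1 : α ≤ 1)
    (κ : Fin n → ℝ) (hκ : κ ∈ posCone n) (hκmono : StrictMono κ)
    (T : Matrix (Fin n) (Fin n) ℝ) (hT : T.IsSymm)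
    (hnull : ∑ l, D1 n f κ l * T l l = (f κ / κ 0) * T 0 0) :
    0 ≤ (∑ k, ∑ l, D2 n f κ k l * T k k * T l l)
        + 2 * ∑ k, ∑ l ∈ Finset.univ.filter (fun l => l < k),
            ((D1 n f κ k - D1 n f κ l) / (κ k - κ l)) * T k l ^ 2
        - (α + 1) * (f κ)⁻¹ * (∑ k, D1 n f κ k * T k k) ^ 2
        + (α + 1) * (κ 0)⁻¹ * ∑ k, D1 n f κ k * T 0 k ^ 2
        + 2 * ∑ k, ∑ l ∈ Finset.univ.filter (fun l => l ≠ 0),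
            (D1 n f κ k / (κ l - κ 0)) * T k l ^ 2 := by
  have ha : ∀ k, 0 < D1 n f κ k := hmono κ hκ
  have hsec := aux_second n f hsmooth hpos hinvconc κ hκ (fun k => T k k)
  have hfst := aux_first n f hsmooth hsym hpos hinvconc κ hκ
  have heul := aux_euler n f hsmooth hhom κ hκ
  have hF := hpos κ hκ
  have hκ0 := hκ 0
  simp only [Finset.sum_filter (fun l : Fin n => l ≠ 0)]
  rw [aux_split n (fun k l => if l ≠ 0 then (D1 n f κ k / (κ l - κ 0)) * T k l ^ 2 else 0)]
  generalize D1 n f κ = a at *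
  generalize f κ = F at *
  have hgt : ∀ k, k ≠ 0 → κ 0 < κ k := fun k hk => hκmono (Fin.pos_iff_ne_zero.2 hk)
  -- off-diagonal part
  have hoff : 0 ≤ (∑ k, ∑ l ∈ Finset.univ.filter (fun l => l < k),
            ((a k - a l) / (κ k - κ l)) * T k l ^ 2)
      + ∑ k, ∑ l ∈ Finset.univ.filter (fun l => l < k),
        ((if l ≠ 0 then (a k / (κ l - κ 0)) * T k l ^ 2 else 0)
          + (if k ≠ 0 then (a l / (κ k - κ 0)) * T l k ^ 2 else 0)) := by
    rw [← Finset.sum_add_distrib]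
    refine Finset.sum_nonneg fun k _ => ?_
    rw [← Finset.sum_add_distrib]
    refine Finset.sum_nonneg fun l hl => ?_
    have hlk : l < k := (Finset.mem_filter.1 hl).2
    have hk0 : k ≠ 0 := ((Fin.zero_le l).trans_lt hlk).ne'
    have hTs : T l k = T k l := hT.apply k l
    have hd : 0 < κ k - κ l := sub_pos.2 (hκmono hlk)
    have hak := ha k
    have hal := ha l
    rw [if_pos hk0, hTs]
    by_cases hl0 : l = 0
    · subst hl0
      simp only [ne_eq, not_true_eq_false, if_false]
      have : (a k - a 0) / (κ k - κ 0) * T k 0 ^ 2 + (0 + a 0 / (κ k - κ 0) * T k 0 ^ 2)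
        = a k / (κ k - κ 0) * T k 0 ^ 2 := by ring
      rw [this]; positivity
    · rw [if_pos hl0]
      have hl1 := hgt l hl0
      have hk1 := hgt k hk0
      have hκl := hκ l
      have hκk := hκ k
      have i1 : a k / κ l ≤ a k / (κ l - κ 0) :=
        div_le_div_of_nonneg_left hak.le (by linarith) (by linarith)
      have i2 : a l / κ k ≤ a l / (κ k - κ 0) :=
        div_le_div_of_nonneg_left hal.le (by linarith) (by linarith)
      have i3 : 0 ≤ (a k - a l) / (κ k - κ l) + a k / κ l + a l / κ k := by
        have : (a k - a l) / (κ k - κ l) + a k / κ l + a l / κ k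
          = (a k * κ k ^ 2 - a l * κ l ^ 2) / (κ k * κ l * (κ k - κ l)) := by
          field_simp; ring
        rw [this]
        exact div_nonneg (sub_nonneg.2 (hfst k l (hκmono hlk))) (by positivity)
      have : (a k - a l) / (κ k - κ l) * T k l ^ 2 + (a k / (κ l - κ 0) * T k l ^ 2
          + a l / (κ k - κ 0) * T k l ^ 2)
        = ((a k - a l) / (κ k - κ l) + a k / (κ l - κ 0) + a l / (κ k - κ 0)) * T k l ^ 2 := by
        ring
      rw [this]
      exact mul_nonneg (by linarith) (sq_nonneg _)
  -- diagonal part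
  have hdiag : (∑ k, a k / κ k * T k k ^ 2) - a 0 / κ 0 * T 0 0 ^ 2 ≤
      ∑ k, (if k ≠ 0 then (a k / (κ k - κ 0)) * T k k ^ 2 else 0) := by
    have : a 0 / κ 0 * T 0 0 ^ 2 = ∑ k, if k = 0 then a k / κ k * T k k ^ 2 else 0 := by simp
    rw [this, ← Finset.sum_sub_distrib]
    refine Finset.sum_le_sum fun k _ => ?_
    by_cases hk : k = 0
    · simp [hk]
    · simp only [hk, if_false, ne_eq, not_false_eq_true, if_true, sub_zero]
      have := hgt k hk
      exact mul_le_mul_of_nonneg_right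
        (div_le_div_of_nonneg_left (ha k).le (by linarith) (by linarith)) (sq_nonneg _)
  have hrow : a 0 * T 0 0 ^ 2 ≤ ∑ k, a k * T 0 k ^ 2 :=
    Finset.single_le_sum (f := fun k => a k * T 0 k ^ 2)
      (fun k _ => mul_nonneg (ha k).le (sq_nonneg _)) (Finset.mem_univ 0)
  have hF0 : a 0 * κ 0 ≤ F := by
    rw [← heul]
    exact Finset.single_le_sum (f := fun k => a k * κ k)
      (fun k _ => mul_nonneg (ha k).le (hκ k).le) (Finset.mem_univ 0)
  have hrow2 : (α + 1) * (κ 0)⁻¹ * (a 0 * T 0 0 ^ 2)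
      ≤ (α + 1) * (κ 0)⁻¹ * ∑ k, a k * T 0 k ^ 2 :=
    mul_le_mul_of_nonneg_left hrow (by positivity)
  have hP : (κ 0)⁻¹ * (a 0 * T 0 0 ^ 2) ≤ F⁻¹ * (∑ k, a k * T k k) ^ 2 := by
    rw [hnull]
    have e1 : F⁻¹ * (F / κ 0 * T 0 0) ^ 2 = F * (T 0 0 ^ 2 / κ 0 ^ 2) := by
      field_simp
    have e2 : (κ 0)⁻¹ * (a 0 * T 0 0 ^ 2) = (a 0 * κ 0) * (T 0 0 ^ 2 / κ 0 ^ 2) := by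
      field_simp
    rw [e1, e2]
    exact mul_le_mul_of_nonneg_right hF0 (by positivity)
  have hP2 := mul_le_mul_of_nonneg_left hP (sub_nonneg.2 hα1)
  have e3 : a 0 / κ 0 * T 0 0 ^ 2 = (κ 0)⁻¹ * (a 0 * T 0 0 ^ 2) := by ring
  rw [e3] at hdiag
  simp only [mul_assoc] at *
  generalize (κ 0)⁻¹ * (a 0 * T 0 0 ^ 2) = u at *
  linarith
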